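/- Suppose (Ω_i, 𝒜_i) = (ℝ, ℬ(ℝ)) for all i = 1,…,n, let P* ∈ ℙ and let c : ℝ^n → [0,∞] be Borel measurable. Let K_3 = {P ∈ M : P ≪ P* and (π_1,…,π_n) is a P-martingale}. If K_3 ≠ ∅, then K_3 is compact and there exists P ∈ K_3 such that P(c) = inf_{Q ∈ K_3} Q(c). -/

import Mathlib

open MeasureTheory Set ENNReal

namespace FATransport

variable {α : Type*} [MeasurableSpace α]

/-- The collection of measurable sets of `α` (the σ-field `𝒜`), as a type. -/
abbrev MSet (α : Type*) [MeasurableSpace α] := {A : Set α // MeasurableSet A}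

/-- A finitely additive probability on the σ-field of `α`, viewed as an element
of `[0,1]^𝒜`: it maps the whole space to `1` and is additive on disjoint pairs. -/
def IsFAP (P : MSet α → unitInterval) : Prop :=
  (P ⟨Set.univ, MeasurableSet.univ⟩ : ℝ) = 1 ∧
    ∀ A B : MSet α, Disjoint A.1 B.1 →
      (P ⟨A.1 ∪ B.1, A.2.union B.2⟩ : ℝ) = (P A : ℝ) + (P B : ℝ)

/-- `ℙ`, the set of all finitely additive probabilities on `𝒜`, as a subset of
`[0,1]^𝒜` (with its product topology). -/
def FAPs (α : Type*) [MeasurableSpace α] : Set (MSet α → unitInterval) :=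
  {P | IsFAP P}

/-- Integral of a simple function with respect to a finitely additive set function. -/
noncomputable def simpleInt (P : MSet α → unitInterval) (s : SimpleFunc α ℝ) : ℝ :=
  ∑ y ∈ s.range, y * (P ⟨(⇑s) ⁻¹' {y}, s.measurableSet_fiber y⟩ : ℝ)

/-- `P(f)` for a bounded measurable `f : α → ℝ`: the supremum of the integrals of
simple functions below `f` (for a f.a.p. `P` and bounded measurable `f` this agrees
with the integral defined by uniform approximation by simple functions). -/
noncomputable def fapInt (P : MSet α → unitInterval) (f : α → ℝ) : ℝ :=
  sSup (simpleInt P '' {s : SimpleFunc α ℝ | ∀ x, s x ≤ f x})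

/-- `P(c) = sup_k P(c ∧ k)` for a `[0,∞]`-valued `c`. -/
noncomputable def fapIntTop (P : MSet α → unitInterval) (c : α → ℝ≥0∞) : ℝ≥0∞ :=
  ⨆ k : ℕ, ENNReal.ofReal (fapInt P (fun x => (c x ⊓ (k : ℝ≥0∞)).toReal))

/-- A real-valued `f` is `P`-integrable iff `P(|f|) < ∞`. -/
def FapIntegrable (P : MSet α → unitInterval) (f : α → ℝ) : Prop :=
  fapIntTop P (fun x => ENNReal.ofReal |f x|) < ⊤

/-- `P(f) = P(f⁺) - P(f⁻)` for a (`P`-integrable) real-valued `f`. -/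
noncomputable def fapIntR (P : MSet α → unitInterval) (f : α → ℝ) : ℝ :=
  (fapIntTop P (fun x => ENNReal.ofReal (f x))).toReal -
    (fapIntTop P (fun x => ENNReal.ofReal (-f x))).toReal

/-- `P ≪ Q` for finitely additive probabilities. -/
def FapAC (P Q : MSet α → unitInterval) : Prop :=
  ∀ A : MSet α, (Q A : ℝ) = 0 → (P A : ℝ) = 0

variable {n : ℕ} {Ω : Fin n → Type*} [∀ i, MeasurableSpace (Ω i)]

/-- `M`, the set of finitely additive probabilities on `𝒜 = ⊗ᵢ 𝒜ᵢ` whose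
`i`-th marginal is `μ i` for every `i`. -/
def couplings (μ : ∀ i, Measure (Ω i)) : Set (MSet (∀ i, Ω i) → unitInterval) :=
  {P | IsFAP P ∧ ∀ (i : Fin n) (B : Set (Ω i)) (hB : MeasurableSet B),
    (P ⟨(fun ω => ω i) ⁻¹' B, (measurable_pi_apply i) hB⟩ : ℝ) = (μ i B).toReal}

end FATransport

namespace FATransport

/-- `(π_1, …, π_n)` is a `P`-martingale for a finitely additive probability `P` on
`ℬ(ℝⁿ)`: each `P(|π_i|) < ∞`, `P(π_1) = 0`, and `P((π_{i+1} - π_i) g(π_1,…,π_i)) = 0`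
for every bounded Borel `g` (encoded as a bounded Borel function on `ℝⁿ` depending
only on the first `i` coordinates). -/
def IsMartFAP {n : ℕ} (hn : 0 < n) (P : MSet (Fin n → ℝ) → unitInterval) : Prop :=
  (∀ i : Fin n, fapIntTop P (fun ω => ENNReal.ofReal |ω i|) < ⊤) ∧
    fapIntR P (fun ω => ω ⟨0, hn⟩) = 0 ∧
    ∀ i j : Fin n, (j : ℕ) = (i : ℕ) + 1 →
      ∀ g : (Fin n → ℝ) → ℝ, Measurable g → (∃ C, ∀ x, |g x| ≤ C) →
        (∀ x y : Fin n → ℝ, (∀ k : Fin n, k ≤ i → x k = y k) → g x = g y) →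
        fapIntR P (fun ω => (ω j - ω i) * g ω) = 0

end FATransport

namespace FATransport

section helpers

variable {β : Type*} [MeasurableSpace β]

open Classical in
noncomputable def TT (P : MSet β → unitInterval) (A : Set β) : ℝ →L[ℝ] ℝ :=
  if h : MeasurableSet A then (P ⟨A, h⟩ : ℝ) • ContinuousLinearMap.id ℝ ℝ else 0

lemma TT_apply (P : MSet β → unitInterval) {A : Set β} (h : MeasurableSet A) (y : ℝ) :
    TT P A y = y * (P ⟨A, h⟩ : ℝ) := by
  simp [TT, h, mul_comm]

lemma simpleInt_eq (P : MSet β → unitInterval) (s : SimpleFunc β ℝ) :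
    simpleInt P s = s.setToSimpleFunc (TT P) := by
  unfold simpleInt SimpleFunc.setToSimpleFunc
  refine Finset.sum_congr rfl fun y _ => ?_
  rw [TT_apply P (s.measurableSet_fiber y)]

lemma TT_add {P : MSet β → unitInterval} (hP : IsFAP P) :
    FinMeasAdditive (0 : Measure β) (TT P) := by
  intro s t hs ht _ _ hd
  ext
  have := hP.2 ⟨s, hs⟩ ⟨t, ht⟩ hd
  simp only [add_apply, TT_apply P hs, TT_apply P ht, TT_apply P (hs.union ht), this]
  ring

lemma simpleInt_add {P : MSet β → unitInterval} (hP : IsFAP P) (s t : SimpleFunc β ℝ) :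
    simpleInt P (s + t) = simpleInt P s + simpleInt P t := by
  simp only [simpleInt_eq]
  exact SimpleFunc.setToSimpleFunc_add _ (TT_add hP) (integrable_zero_measure)
    (integrable_zero_measure)

lemma simpleInt_smul {P : MSet β → unitInterval} (hP : IsFAP P) (r : ℝ) (s : SimpleFunc β ℝ) :
    simpleInt P (r • s) = r * simpleInt P s := by
  simp only [simpleInt_eq]
  exact SimpleFunc.setToSimpleFunc_smul_real _ (TT_add hP) r (integrable_zero_measure)

lemma simpleInt_mono {P : MSet β → unitInterval} (hP : IsFAP P) {s t : SimpleFunc β ℝ}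
    (h : ∀ x, s x ≤ t x) : simpleInt P s ≤ simpleInt P t := by
  simp only [simpleInt_eq]
  refine SimpleFunc.setToSimpleFunc_mono (TT_add hP) ?_ (integrable_zero_measure)
    (integrable_zero_measure) h
  intro A hA _ x hx
  rw [TT_apply P hA]
  exact mul_nonneg hx (P _).2.1

lemma simpleInt_const {P : MSet β → unitInterval} (hP : IsFAP P) (r : ℝ) :
    simpleInt P (SimpleFunc.const β r) = r := by
  rw [simpleInt_eq, SimpleFunc.setToSimpleFunc_const, TT_apply P MeasurableSet.univ, hP.1, mul_one]
  have h := hP.2 ⟨∅, MeasurableSet.empty⟩ ⟨∅, MeasurableSet.empty⟩ (by simp)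
  simp only [Set.union_empty] at h
  ext
  rw [TT_apply P MeasurableSet.empty]
  simp only [zero_apply, one_mul]
  linarith

lemma simpleInt_le_add {P : MSet β → unitInterval} (hP : IsFAP P) {s t : SimpleFunc β ℝ} {ε : ℝ}
    (h : ∀ x, s x ≤ t x + ε) : simpleInt P s ≤ simpleInt P t + ε := by
  have := simpleInt_mono hP (s := s) (t := t + SimpleFunc.const β ε) (by simpa using h)
  rwa [simpleInt_add hP, simpleInt_const hP] at this

lemma fapInt_bounds {P : MSet β → unitInterval} (hP : IsFAP P) {f : β → ℝ} {s : SimpleFunc β ℝ}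
    {ε : ℝ} (h1 : ∀ x, s x ≤ f x) (h2 : ∀ x, f x ≤ s x + ε) :
    simpleInt P s ≤ fapInt P f ∧ fapInt P f ≤ simpleInt P s + ε := by
  have hub : ∀ y ∈ simpleInt P '' {s : SimpleFunc β ℝ | ∀ x, s x ≤ f x},
      y ≤ simpleInt P s + ε := by
    rintro _ ⟨t, ht, rfl⟩
    exact simpleInt_le_add hP fun x => (ht x).trans (h2 x)
  exact ⟨le_csSup ⟨_, hub⟩ ⟨s, h1, rfl⟩, csSup_le ⟨_, s, h1, rfl⟩ hub⟩

lemma exists_approx {f : β → ℝ} (hf : Measurable f) {C : ℝ} (hC : ∀ x, |f x| ≤ C) {ε : ℝ}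
    (hε : 0 < ε) : ∃ s : SimpleFunc β ℝ, (∀ x, s x ≤ f x) ∧ ∀ x, f x ≤ s x + ε := by
  have hm : Measurable fun x => ε * (⌊f x / ε⌋ : ℝ) := by fun_prop
  refine ⟨⟨fun x => ε * (⌊f x / ε⌋ : ℝ), fun y => hm (measurableSet_singleton y), ?_⟩, ?_, ?_⟩
  · refine ((Set.finite_Icc ⌊-C / ε⌋ ⌊C / ε⌋).image fun z : ℤ => ε * (z : ℝ)).subset ?_
    rintro _ ⟨x, rfl⟩
    have := abs_le.1 (hC x)
    exact ⟨⌊f x / ε⌋, ⟨Int.floor_mono (by gcongr; exact this.1),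
      Int.floor_mono (by gcongr; exact this.2)⟩, rfl⟩
  · intro x
    change ε * (⌊f x / ε⌋ : ℝ) ≤ f x
    have := Int.floor_le (f x / ε)
    rw [le_div_iff₀ hε] at this
    linarith
  · intro x
    change f x ≤ ε * (⌊f x / ε⌋ : ℝ) + ε
    have := (Int.lt_floor_add_one (f x / ε)).le
    rw [div_le_iff₀ hε] at this
    linarith

def BM (f : β → ℝ) : Prop := Measurable f ∧ ∃ C, ∀ x, |f x| ≤ C

lemma BM.add {f g : β → ℝ} (hf : BM f) (hg : BM g) : BM (fun x => f x + g x) := by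
  obtain ⟨hf, C, hC⟩ := hf
  obtain ⟨hg, D, hD⟩ := hg
  exact ⟨hf.add hg, C + D, fun x => (abs_add_le _ _).trans (add_le_add (hC x) (hD x))⟩

lemma BM.smul {f : β → ℝ} (r : ℝ) (hf : BM f) : BM (fun x => r * f x) := by
  obtain ⟨hf, C, hC⟩ := hf
  refine ⟨hf.const_mul r, |r| * C, fun x => ?_⟩
  rw [abs_mul]
  exact mul_le_mul_of_nonneg_left (hC x) (abs_nonneg r)

lemma BM.approx {f : β → ℝ} (hf : BM f) {ε : ℝ} (hε : 0 < ε) :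
    ∃ s : SimpleFunc β ℝ, (∀ x, s x ≤ f x) ∧ ∀ x, f x ≤ s x + ε := by
  obtain ⟨hf, C, hC⟩ := hf
  exact exists_approx hf hC hε

lemma fapInt_mono {P : MSet β → unitInterval} (hP : IsFAP P) {f g : β → ℝ} (hf : BM f) (hg : BM g)
    (h : ∀ x, f x ≤ g x) : fapInt P f ≤ fapInt P g := by
  refine le_of_forall_pos_le_add fun ε hε => ?_
  obtain ⟨s, h1, h2⟩ := hf.approx hε
  have a := fapInt_bounds hP h1 h2
  obtain ⟨t, h3, h4⟩ := hg.approx hε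
  have b := fapInt_bounds hP h3 h4
  have : simpleInt P s ≤ fapInt P g := by
    refine le_csSup ⟨simpleInt P t + ε, ?_⟩ ⟨s, fun x => (h1 x).trans (h x), rfl⟩
    rintro _ ⟨u, hu, rfl⟩
    exact simpleInt_le_add hP fun x => (hu x).trans (h4 x)
  linarith

lemma fapInt_add {P : MSet β → unitInterval} (hP : IsFAP P) {f g : β → ℝ} (hf : BM f) (hg : BM g) :
    fapInt P (fun x => f x + g x) = fapInt P f + fapInt P g := by
  refine eq_of_forall_dist_le fun ε hε => ?_
  have hε2 : 0 < ε / 2 := by positivity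
  obtain ⟨s, h1, h2⟩ := hf.approx hε2
  have a := fapInt_bounds hP h1 h2
  obtain ⟨t, h3, h4⟩ := hg.approx hε2
  have b := fapInt_bounds hP h3 h4
  have c := fapInt_bounds hP (f := fun x => f x + g x) (s := s + t) (ε := ε)
    (fun x => add_le_add (h1 x) (h3 x))
    (fun x => by have := h2 x; have := h4 x; simp only [SimpleFunc.coe_add, Pi.add_apply]; linarith)
  rw [simpleInt_add hP] at c
  rw [Real.dist_eq, abs_le]
  constructor <;> linarith

lemma fapInt_smul {P : MSet β → unitInterval} (hP : IsFAP P) {f : β → ℝ} (hf : BM f) {r : ℝ}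
    (hr : 0 ≤ r) : fapInt P (fun x => r * f x) = r * fapInt P f := by
  refine eq_of_forall_dist_le fun ε hε => ?_
  have hr1 : 0 < r + 1 := by linarith
  have hε2 : 0 < ε / (r + 1) := by positivity
  obtain ⟨s, h1, h2⟩ := hf.approx hε2
  have a := fapInt_bounds hP h1 h2
  have hle : r * (ε / (r + 1)) ≤ ε := by
    rw [mul_div_assoc', div_le_iff₀ hr1]; nlinarith
  have c := fapInt_bounds hP (f := fun x => r * f x) (s := r • s) (ε := r * (ε / (r + 1)))
    (fun x => mul_le_mul_of_nonneg_left (h1 x) hr)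
    (fun x => by
      have := mul_le_mul_of_nonneg_left (h2 x) hr
      simp only [SimpleFunc.coe_smul, Pi.smul_apply, smul_eq_mul]; linarith)
  rw [simpleInt_smul hP] at c
  have a1 := mul_le_mul_of_nonneg_left a.1 hr
  have a2 := mul_le_mul_of_nonneg_left a.2 hr
  rw [Real.dist_eq, abs_le]
  constructor <;> linarith

lemma continuous_simpleInt (s : SimpleFunc β ℝ) :
    Continuous fun P : MSet β → unitInterval => simpleInt P s := by
  unfold simpleInt
  refine continuous_finsetSum _ fun y _ => ?_
  exact continuous_const.mul (continuous_subtype_val.comp (continuous_apply _))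

lemma continuousOn_fapInt {f : β → ℝ} (hf : BM f) :
    ContinuousOn (fun P : MSet β → unitInterval => fapInt P f) {P | IsFAP P} := by
  refine continuousOn_of_uniform_approx_of_continuousOn fun u hu => ?_
  obtain ⟨ε, hε, hu⟩ := Metric.mem_uniformity_dist.1 hu
  obtain ⟨s, h1, h2⟩ := hf.approx (half_pos hε)
  refine ⟨fun P => simpleInt P s, (continuous_simpleInt s).continuousOn, fun P hP => hu ?_⟩
  have a := fapInt_bounds hP h1 h2
  rw [Real.dist_eq, abs_lt]
  constructor <;> linarith

lemma BM_trunc {c : β → ℝ≥0∞} (hc : Measurable c) (k : ℕ) :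
    BM (fun x => (c x ⊓ (k : ℝ≥0∞)).toReal) := by
  refine ⟨(hc.inf measurable_const).ennreal_toReal, k, fun x => ?_⟩
  rw [abs_of_nonneg ENNReal.toReal_nonneg]
  have := ENNReal.toReal_mono (ENNReal.natCast_ne_top k) (inf_le_right : c x ⊓ (k : ℝ≥0∞) ≤ k)
  simpa using this

lemma lsc_fapIntTop {c : β → ℝ≥0∞} (hc : Measurable c) :
    LowerSemicontinuousOn (fun P : MSet β → unitInterval => fapIntTop P c) {P | IsFAP P} := by
  unfold fapIntTop
  refine lowerSemicontinuousOn_iSup fun k => ContinuousOn.lowerSemicontinuousOn ?_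
  exact ENNReal.continuous_ofReal.comp_continuousOn (continuousOn_fapInt (BM_trunc hc k))

lemma trunc_eq (a : ℝ) (k : ℕ) :
    (ENNReal.ofReal a ⊓ (k : ℝ≥0∞)).toReal = min (max a 0) k := by
  rw [ENNReal.toReal_min ENNReal.ofReal_ne_top (ENNReal.natCast_ne_top k), ENNReal.toReal_ofReal',
    ENNReal.toReal_natCast]

lemma trunc_nonneg {P : MSet β → unitInterval} (hP : IsFAP P) {c : β → ℝ≥0∞} (hc : Measurable c)
    (k : ℕ) : 0 ≤ fapInt P (fun x => (c x ⊓ (k : ℝ≥0∞)).toReal) := by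
  have := fapInt_mono hP (f := fun _ => 0) ⟨measurable_const, 0, by simp⟩ (BM_trunc hc k)
    (fun x => ENNReal.toReal_nonneg)
  have h0 := fapInt_smul hP (f := fun _ : β => 0) ⟨measurable_const, 0, by simp⟩ (le_refl (0 : ℝ))
  simp at h0
  linarith

/-- `toReal` of the supremum is squeezed. -/
lemma fapIntTop_squeeze {P : MSet β → unitInterval} (hP : IsFAP P) {c : β → ℝ≥0∞}
    (hc : Measurable c) {K : ℕ} {δ : ℝ}
    (h : ∀ m : ℕ, fapInt P (fun x => (c x ⊓ (m : ℝ≥0∞)).toReal) ≤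
      fapInt P (fun x => (c x ⊓ (K : ℝ≥0∞)).toReal) + δ) :
    fapInt P (fun x => (c x ⊓ (K : ℝ≥0∞)).toReal) ≤ (fapIntTop P c).toReal ∧
    (fapIntTop P c).toReal ≤ fapInt P (fun x => (c x ⊓ (K : ℝ≥0∞)).toReal) + δ := by
  have hle : fapIntTop P c ≤
      ENNReal.ofReal (fapInt P (fun x => (c x ⊓ (K : ℝ≥0∞)).toReal) + δ) :=
    iSup_le fun m => ENNReal.ofReal_le_ofReal (h m)
  have hge : ENNReal.ofReal (fapInt P (fun x => (c x ⊓ (K : ℝ≥0∞)).toReal)) ≤ fapIntTop P c :=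
    le_iSup (fun k : ℕ => ENNReal.ofReal (fapInt P (fun x => (c x ⊓ (k : ℝ≥0∞)).toReal))) K
  have h0 := trunc_nonneg hP hc K
  have h1 := h K
  constructor
  · rw [← ENNReal.toReal_ofReal h0]
    exact ENNReal.toReal_mono (ne_top_of_le_ne_top ENNReal.ofReal_ne_top hle) hge
  · rw [← ENNReal.toReal_ofReal (h0.trans (h K))]
    exact ENNReal.toReal_mono ENNReal.ofReal_ne_top hle

end helpers

section main

variable {n : ℕ} {μ : Fin n → Measure ℝ}

/-- Same marginals give the same integrals of cylinder functions. -/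
lemma fapInt_marg {P Q : MSet (Fin n → ℝ) → unitInterval} (hP : P ∈ couplings μ)
    (hQ : Q ∈ couplings μ) {φ : ℝ → ℝ} (hφ : BM φ) (i : Fin n) :
    fapInt P (fun ω => φ (ω i)) = fapInt Q (fun ω => φ (ω i)) := by
  refine eq_of_forall_dist_le fun ε hε => ?_
  obtain ⟨s, h1, h2⟩ := hφ.approx hε
  let t : SimpleFunc (Fin n → ℝ) ℝ := s.comp (fun ω => ω i) (measurable_pi_apply i)
  have e : simpleInt P t = simpleInt Q t := by
    unfold simpleInt
    refine Finset.sum_congr rfl fun y _ => ?_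
    congr 1
    exact (hP.2 i (s ⁻¹' {y}) (s.measurableSet_fiber y)).trans
      (hQ.2 i (s ⁻¹' {y}) (s.measurableSet_fiber y)).symm
  have a := fapInt_bounds hP.1 (f := fun ω => φ (ω i)) (s := t) (fun x => h1 (x i))
    (fun x => h2 (x i))
  have b := fapInt_bounds hQ.1 (f := fun ω => φ (ω i)) (s := t) (fun x => h1 (x i))
    (fun x => h2 (x i))
  rw [Real.dist_eq, abs_le]
  constructor <;> linarith

lemma BM_abs (k : ℕ) : BM (fun x : ℝ => (ENNReal.ofReal |x| ⊓ (k : ℝ≥0∞)).toReal) :=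
  BM_trunc (by fun_prop) k

lemma BM_absi (i : Fin n) (k : ℕ) :
    BM (fun ω : Fin n → ℝ => (ENNReal.ofReal |ω i| ⊓ (k : ℝ≥0∞)).toReal) :=
  BM_trunc (c := fun ω : Fin n → ℝ => ENNReal.ofReal |ω i|) (by fun_prop) k

lemma fapIntTop_abs_marg {P Q : MSet (Fin n → ℝ) → unitInterval} (hP : P ∈ couplings μ)
    (hQ : Q ∈ couplings μ) (i : Fin n) :
    fapIntTop P (fun ω => ENNReal.ofReal |ω i|) = fapIntTop Q (fun ω => ENNReal.ofReal |ω i|) := by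
  unfold fapIntTop
  congr 1
  ext k
  rw [fapInt_marg hP hQ (BM_abs k) i]

lemma exists_tail {P₀ : MSet (Fin n → ℝ) → unitInterval} (hP₀ : P₀ ∈ couplings μ) (i : Fin n)
    (hfin : fapIntTop P₀ (fun ω => ENNReal.ofReal |ω i|) < ⊤) {η : ℝ} (hη : 0 < η) :
    ∃ k : ℕ, ∀ P ∈ couplings μ, ∀ m : ℕ,
      fapInt P (fun ω => (ENNReal.ofReal |ω i| ⊓ (m : ℝ≥0∞)).toReal) ≤
      fapInt P (fun ω => (ENNReal.ofReal |ω i| ⊓ (k : ℝ≥0∞)).toReal) + η := by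
  set a : ℕ → ℝ := fun k => fapInt P₀ (fun ω => (ENNReal.ofReal |ω i| ⊓ (k : ℝ≥0∞)).toReal) with ha
  have hbd : BddAbove (Set.range a) := by
    refine ⟨(fapIntTop P₀ (fun ω => ENNReal.ofReal |ω i|)).toReal, ?_⟩
    rintro _ ⟨k, rfl⟩
    rw [← ENNReal.ofReal_le_iff_le_toReal hfin.ne]
    exact le_iSup (fun k : ℕ => ENNReal.ofReal (a k)) k
  obtain ⟨k, hk⟩ := exists_lt_of_lt_ciSup (show iSup a - η < iSup a by linarith)
  refine ⟨k, fun P hP m => ?_⟩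
  rw [fapInt_marg hP hP₀ (BM_abs m) i, fapInt_marg hP hP₀ (BM_abs k) i]
  have := le_ciSup hbd m
  change a m ≤ a k + η
  linarith

lemma pointwise_bound {f u v L : ℝ} {k0 k1 K m : ℕ} (hL : 1 ≤ L) (hf : f ≤ L * (u + v))
    (hK : 2 * L * (k0 + k1) ≤ K) (hu : 0 ≤ u) (hv : 0 ≤ v) :
    min (max f 0) m + (2 * L * min u k0 + 2 * L * min v k1) ≤
    min (max f 0) K + (2 * L * min u ((m + k0 + k1 : ℕ) : ℝ)
      + 2 * L * min v ((m + k0 + k1 : ℕ) : ℝ)) := by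
  have hk0 : (0 : ℝ) ≤ k0 := k0.cast_nonneg
  have hk1 : (0 : ℝ) ≤ k1 := k1.cast_nonneg
  have hm : (0 : ℝ) ≤ m := m.cast_nonneg
  push_cast
  have A : min u (k0 : ℝ) ≤ min u (m + k0 + k1 : ℝ) := min_le_min_left _ (by linarith)
  have B : min v (k1 : ℝ) ≤ min v (m + k0 + k1 : ℝ) := min_le_min_left _ (by linarith)
  have A' := mul_le_mul_of_nonneg_left A (show 0 ≤ 2 * L by linarith)
  have B' := mul_le_mul_of_nonneg_left B (show 0 ≤ 2 * L by linarith)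
  rcases le_total (min (max f 0) (m : ℝ)) K with h | h
  · have : min (max f 0) (m : ℝ) ≤ min (max f 0) K := le_min (min_le_left _ _) h
    linarith
  · have hK' : min (max f 0) (K : ℝ) = K := min_eq_right (h.trans (min_le_left _ _))
    rw [hK']
    have key : ∀ w : ℝ, 0 ≤ w → f ≤ 2 * L * w →
        min (max f 0) (m : ℝ) ≤ 2 * L * min w (m + k0 + k1 : ℝ) := by
      intro w hw hfw
      rcases le_total w (m + k0 + k1 : ℝ) with h | h
      · rw [min_eq_left h]
        exact (min_le_left _ _).trans (max_le hfw (by positivity))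
      · rw [min_eq_right h]
        refine (min_le_right _ _).trans ?_
        nlinarith
    have lu : 2 * L * min u (k0 : ℝ) ≤ 2 * L * k0 :=
      mul_le_mul_of_nonneg_left (min_le_right _ _) (by linarith)
    have lv : 2 * L * min v (k1 : ℝ) ≤ 2 * L * k1 :=
      mul_le_mul_of_nonneg_left (min_le_right _ _) (by linarith)
    have p0 : 0 ≤ 2 * L * k0 := by positivity
    have p1 : 0 ≤ 2 * L * k1 := by positivity
    rcases le_total u v with huv | huv
    · have := key v hv (by nlinarith)
      linarith
    · have := key u hu (by nlinarith)
      linarith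

lemma continuousOn_top {P₀ : MSet (Fin n → ℝ) → unitInterval} (hP₀ : P₀ ∈ couplings μ)
    (hfin : ∀ i, fapIntTop P₀ (fun ω => ENNReal.ofReal |ω i|) < ⊤) {f : (Fin n → ℝ) → ℝ}
    (hf : Measurable f) {L : ℝ} (hL : 1 ≤ L) (i j : Fin n)
    (hb : ∀ ω, f ω ≤ L * (|ω i| + |ω j|)) :
    ContinuousOn (fun P => (fapIntTop P (fun ω => ENNReal.ofReal (f ω))).toReal)
      (couplings μ) := by
  refine continuousOn_of_uniform_approx_of_continuousOn fun u hu => ?_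
  obtain ⟨ε, hε, hu⟩ := Metric.mem_uniformity_dist.1 hu
  have hη : 0 < ε / (8 * L) := by positivity
  obtain ⟨k0, h0⟩ := exists_tail hP₀ i (hfin i) hη
  obtain ⟨k1, h1⟩ := exists_tail hP₀ j (hfin j) hη
  obtain ⟨K, hK⟩ := exists_nat_ge (2 * L * (k0 + k1))
  have hfm : Measurable fun ω => ENNReal.ofReal (f ω) := by fun_prop
  refine ⟨fun P => fapInt P (fun ω => (ENNReal.ofReal (f ω) ⊓ (K : ℝ≥0∞)).toReal),
    (continuousOn_fapInt (BM_trunc hfm K)).mono fun P hP => hP.1, fun P hP => hu ?_⟩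
  have hL2 : (0 : ℝ) ≤ 2 * L := by linarith
  have key := fapIntTop_squeeze hP.1 hfm (K := K) (δ := ε / 2) (by
    intro m
    have hm := fapInt_mono hP.1
      ((BM_trunc hfm m).add (((BM_absi i k0).smul (2 * L)).add ((BM_absi j k1).smul (2 * L))))
      ((BM_trunc hfm K).add (((BM_absi i (m + k0 + k1)).smul (2 * L)).add
        ((BM_absi j (m + k0 + k1)).smul (2 * L))))
      (fun ω => by
        simp only [trunc_eq]
        rw [max_eq_left (abs_nonneg (ω i)), max_eq_left (abs_nonneg (ω j))]
        exact pointwise_bound hL (hb ω) hK (abs_nonneg _) (abs_nonneg _))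
    rw [fapInt_add hP.1 (BM_trunc hfm m)
        (((BM_absi i k0).smul (2 * L)).add ((BM_absi j k1).smul (2 * L))),
      fapInt_add hP.1 ((BM_absi i k0).smul (2 * L)) ((BM_absi j k1).smul (2 * L)),
      fapInt_smul hP.1 (BM_absi i k0) hL2, fapInt_smul hP.1 (BM_absi j k1) hL2,
      fapInt_add hP.1 (BM_trunc hfm K) (((BM_absi i (m + k0 + k1)).smul (2 * L)).add
        ((BM_absi j (m + k0 + k1)).smul (2 * L))),
      fapInt_add hP.1 ((BM_absi i (m + k0 + k1)).smul (2 * L))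
        ((BM_absi j (m + k0 + k1)).smul (2 * L)),
      fapInt_smul hP.1 (BM_absi i (m + k0 + k1)) hL2,
      fapInt_smul hP.1 (BM_absi j (m + k0 + k1)) hL2] at hm
    have a0 := mul_le_mul_of_nonneg_left (h0 P hP (m + k0 + k1)) hL2
    have a1 := mul_le_mul_of_nonneg_left (h1 P hP (m + k0 + k1)) hL2
    have e : 2 * L * (ε / (8 * L)) = ε / 4 := by field_simp; norm_num
    rw [mul_add, e] at a0 a1
    linarith)
  rw [Real.dist_eq, abs_lt]
  constructor <;> linarith [key.1, key.2]

lemma continuousOn_R {P₀ : MSet (Fin n → ℝ) → unitInterval} (hP₀ : P₀ ∈ couplings μ)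
    (hfin : ∀ i, fapIntTop P₀ (fun ω => ENNReal.ofReal |ω i|) < ⊤) {f : (Fin n → ℝ) → ℝ}
    (hf : Measurable f) {L : ℝ} (hL : 1 ≤ L) (i j : Fin n)
    (hb : ∀ ω, |f ω| ≤ L * (|ω i| + |ω j|)) :
    ContinuousOn (fun P => fapIntR P f) (couplings μ) :=
  (continuousOn_top hP₀ hfin hf hL i j fun ω => (le_abs_self _).trans (hb ω)).sub
    (continuousOn_top hP₀ hfin hf.neg hL i j fun ω => (neg_le_abs _).trans (hb ω))

lemma isClosed_couplings : IsClosed (couplings μ) := by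
  have hev : ∀ A : MSet (Fin n → ℝ),
      Continuous fun P : MSet (Fin n → ℝ) → unitInterval => (P A : ℝ) :=
    fun A => continuous_subtype_val.comp (continuous_apply A)
  unfold couplings IsFAP
  simp only [Set.setOf_and, Set.setOf_forall]
  refine ((isClosed_eq (hev _) continuous_const).inter ?_).inter ?_
  · exact isClosed_iInter fun A => isClosed_iInter fun B => isClosed_iInter fun _ =>
      isClosed_eq (hev _) ((hev _).add (hev _))
  · exact isClosed_iInter fun i => isClosed_iInter fun B => isClosed_iInter fun hB =>
      isClosed_eq (hev _) continuous_const

lemma isClosed_K3 (hn : 0 < n) (Pstar : MSet (Fin n → ℝ) → unitInterval)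
    (hne : ({P ∈ couplings μ | FapAC P Pstar ∧ IsMartFAP hn P}).Nonempty) :
    IsClosed {P ∈ couplings μ | FapAC P Pstar ∧ IsMartFAP hn P} := by
  obtain ⟨P₀, hP₀, -, hfin, -⟩ := hne
  have hM : IsClosed (couplings μ) := isClosed_couplings
  have hev : ∀ A : MSet (Fin n → ℝ),
      Continuous fun P : MSet (Fin n → ℝ) → unitInterval => (P A : ℝ) :=
    fun A => continuous_subtype_val.comp (continuous_apply A)
  have hR : ∀ {f : (Fin n → ℝ) → ℝ}, ContinuousOn (fun P => fapIntR P f) (couplings μ) →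
      IsClosed (couplings μ ∩ {P | fapIntR P f = 0}) := fun h =>
    h.preimage_isClosed_of_isClosed hM isClosed_singleton
  have hset : {P ∈ couplings μ | FapAC P Pstar ∧ IsMartFAP hn P} =
      {P | FapAC P Pstar} ∩ ((couplings μ ∩ {P | fapIntR P (fun ω => ω ⟨0, hn⟩) = 0}) ∩
        ⋂ (i : Fin n) (j : Fin n) (_ : (j : ℕ) = (i : ℕ) + 1) (g : (Fin n → ℝ) → ℝ)
          (_ : Measurable g) (_ : ∃ C, ∀ x, |g x| ≤ C)
          (_ : ∀ x y : Fin n → ℝ, (∀ k : Fin n, k ≤ i → x k = y k) → g x = g y),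
          (couplings μ ∩ {P | fapIntR P (fun ω => (ω j - ω i) * g ω) = 0})) := by
    ext P
    simp only [Set.mem_setOf_eq, Set.mem_inter_iff, Set.mem_iInter]
    constructor
    · rintro ⟨h1, h2, h3, h4, h5⟩
      exact ⟨h2, ⟨h1, h4⟩, fun i j hij g hg hC hd => ⟨h1, h5 i j hij g hg hC hd⟩⟩
    · rintro ⟨h2, ⟨h1, h4⟩, h5⟩
      refine ⟨h1, h2, fun i => ?_, h4, fun i j hij g hg hC hd => (h5 i j hij g hg hC hd).2⟩
      rw [fapIntTop_abs_marg h1 hP₀ i]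
      exact hfin i
  rw [hset]
  refine IsClosed.inter ?_ (IsClosed.inter (hR ?_) ?_)
  · unfold FapAC
    simp only [Set.setOf_forall]
    exact isClosed_iInter fun A => isClosed_iInter fun _ => isClosed_eq (hev _) continuous_const
  · refine continuousOn_R hP₀ hfin (measurable_pi_apply _) le_rfl ⟨0, hn⟩ ⟨0, hn⟩ fun ω => ?_
    have := abs_nonneg (ω ⟨0, hn⟩)
    linarith
  · refine isClosed_iInter fun i => isClosed_iInter fun j => isClosed_iInter fun _ =>
      isClosed_iInter fun g => isClosed_iInter fun hg => isClosed_iInter fun hC =>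
      isClosed_iInter fun _ => hR ?_
    obtain ⟨C, hC⟩ := hC
    refine continuousOn_R hP₀ hfin (by fun_prop) (le_max_right C 1) i j fun ω => ?_
    rw [abs_mul, mul_comm]
    refine mul_le_mul ((hC ω).trans (le_max_left _ _)) ?_ (abs_nonneg _) (by positivity)
    rw [add_comm]
    exact abs_sub _ _

end main

end FATransport

namespace FATransport

/-- on `Ω = ℝⁿ`, given `P* ∈ ℙ`, if
`K₃ = {P ∈ M : P ≪ P* and (π_1,…,π_n) is a P-martingale}` is nonempty, then `K₃` is
compact and there is `P ∈ K₃` with `P(c) = inf_{Q ∈ K₃} Q(c)`. -/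
theorem K3_compact_and_min
    {n : ℕ} (hn : 0 < n) (μ : Fin n → Measure ℝ) [∀ i, IsProbabilityMeasure (μ i)]
    (c : (Fin n → ℝ) → ℝ≥0∞) (hc : Measurable c)
    (Pstar : MSet (Fin n → ℝ) → unitInterval) (hPstar : IsFAP Pstar)
    (hne : ({P ∈ couplings μ | FapAC P Pstar ∧ IsMartFAP hn P}).Nonempty) :
    IsCompact {P ∈ couplings μ | FapAC P Pstar ∧ IsMartFAP hn P} ∧
      ∃ P ∈ {P ∈ couplings μ | FapAC P Pstar ∧ IsMartFAP hn P},
        fapIntTop P c =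
          ⨅ Q ∈ {P ∈ couplings μ | FapAC P Pstar ∧ IsMartFAP hn P}, fapIntTop Q c := by
  have hcl := isClosed_K3 hn Pstar hne
  refine ⟨hcl.isCompact, ?_⟩
  have hlsc := (lsc_fapIntTop hc).mono
    (fun P (hP : P ∈ {P ∈ couplings μ | FapAC P Pstar ∧ IsMartFAP hn P}) => hP.1.1)
  obtain ⟨P, hP, hmin⟩ := hlsc.exists_isMinOn hne hcl.isCompact
  exact ⟨P, hP, le_antisymm (le_iInf₂ fun Q hQ => hmin hQ) (iInf₂_le P hP)⟩

end FATransport
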